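/- Let (v¹, v², ξ₁, ξ₂, ξ₃) be a classical solution of the backward coupled observer system on [0,T], and define the Lyapunov function V(t) := (1/2)·(∫₀¹ (|∂ₓv¹(t,x)|² + |v²(t,x)|²) dx + γ₁ω²·ξ₁(t)² + γ₁·ξ₂(t)²). Then V is differentiable on [0,T] and V'(t) = −γ₁γ₂ω²·ξ₁(t)² ≤ 0 for every t ∈ [0,T]. (This shows that the same Lyapunov function decreases along the time-reversed observer dynamics, which is the key design property of the back-and-forth scheme.) -/

import Mathlib

open Set Filter MeasureTheory intervalIntegral

/-- A classical solution of the backward (time-reversed) coupled observer system on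
`[0,T]`: `∂ₜv¹ = −v²`, `∂ₜv² = −∂ₓₓv¹` on `[0,T] × [0,1]`, boundary conditions
`v¹(t,1) = 0`, `v¹(t,0) = γ₁ξ₁(t) + γ₁γ₂ξ₃(t)`, and the observer ODEs
`ξ₁' = −ξ₂ − γ₂ξ₁`, `ξ₂' = ω²ξ₁ − ∂ₓv¹(·,0)`, `ξ₃' = ξ₁` on `[0,T]`. -/
structure BwdObserverSol (T ω γ₁ γ₂ : ℝ) where
  v1 : ℝ → ℝ → ℝ
  v2 : ℝ → ℝ → ℝ
  ξ1 : ℝ → ℝ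
  ξ2 : ℝ → ℝ
  ξ3 : ℝ → ℝ
  smooth_v1 : ContDiff ℝ 2 (Function.uncurry v1)
  smooth_v2 : ContDiff ℝ 2 (Function.uncurry v2)
  smooth_ξ1 : ContDiff ℝ 1 ξ1
  smooth_ξ2 : ContDiff ℝ 1 ξ2
  smooth_ξ3 : ContDiff ℝ 1 ξ3
  pde1 : ∀ t ∈ Icc (0:ℝ) T, ∀ x ∈ Icc (0:ℝ) 1, deriv (fun s => v1 s x) t = -v2 t x
  pde2 : ∀ t ∈ Icc (0:ℝ) T, ∀ x ∈ Icc (0:ℝ) 1,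
    deriv (fun s => v2 s x) t = -deriv (deriv (fun y => v1 t y)) x
  bc1 : ∀ t ∈ Icc (0:ℝ) T, v1 t 1 = 0
  bc0 : ∀ t ∈ Icc (0:ℝ) T, v1 t 0 = γ₁ * ξ1 t + γ₁ * γ₂ * ξ3 t
  ode1 : ∀ t ∈ Icc (0:ℝ) T, deriv ξ1 t = -ξ2 t - γ₂ * ξ1 t
  ode2 : ∀ t ∈ Icc (0:ℝ) T, deriv ξ2 t = ω ^ 2 * ξ1 t - deriv (fun y => v1 t y) 0
  ode3 : ∀ t ∈ Icc (0:ℝ) T, deriv ξ3 t = ξ1 t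

/-- Partial derivative in the first variable of a function differentiable on the plane. -/
lemma DifferentiableAt.hasDerivAt_fst {f : ℝ × ℝ → ℝ} {t x : ℝ}
    (hf : DifferentiableAt ℝ f (t, x)) :
    HasDerivAt (fun s => f (s, x)) (fderiv ℝ f (t, x) (1, 0)) t :=
  hf.hasFDerivAt.comp_hasDerivAt t ((hasDerivAt_id t).prodMk (hasDerivAt_const t x))

/-- Partial derivative in the second variable of a function differentiable on the plane. -/
lemma DifferentiableAt.hasDerivAt_snd {f : ℝ × ℝ → ℝ} {t x : ℝ}
    (hf : DifferentiableAt ℝ f (t, x)) :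
    HasDerivAt (fun y => f (t, y)) (fderiv ℝ f (t, x) (0, 1)) x :=
  hf.hasFDerivAt.comp_hasDerivAt x ((hasDerivAt_const x t).prodMk (hasDerivAt_id x))

/-- Directional derivatives of a `C²` function are `C¹`. -/
lemma ContDiff.fderiv_apply_const_one {f : ℝ × ℝ → ℝ} (hf : ContDiff ℝ 2 f) (v : ℝ × ℝ) :
    ContDiff ℝ 1 (fun p => fderiv ℝ f p v) :=
  (hf.fderiv_right (by norm_num)).clm_apply contDiff_const

/-- Directional derivatives of a `C²` function commute. -/
lemma ContDiff.fderiv_fderiv_apply_comm {f : ℝ × ℝ → ℝ} (hf : ContDiff ℝ 2 f)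
    (p v w : ℝ × ℝ) :
    fderiv ℝ (fun q => fderiv ℝ f q v) p w = fderiv ℝ (fun q => fderiv ℝ f q w) p v := by
  have hd : DifferentiableAt ℝ (fderiv ℝ f) p :=
    (hf.fderiv_right (m := 1) (by norm_num)).differentiable one_ne_zero p
  have hsymm : IsSymmSndFDerivAt ℝ f p := hf.contDiffAt.isSymmSndFDerivAt (by simp)
  have happ : ∀ v w : ℝ × ℝ,
      fderiv ℝ (fun q => fderiv ℝ f q v) p w = fderiv ℝ (fderiv ℝ f) p w v := fun v w => by
    rw [fderiv_clm_apply hd (differentiableAt_const v)]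
    simp
  rw [happ, happ, hsymm.eq]

/-- Functions that agree on a nondegenerate closed interval have equal derivatives there. -/
lemma Set.EqOn.hasDerivAt_unique_Icc {φ ψ : ℝ → ℝ} {a b x φ' ψ' : ℝ} (h : EqOn φ ψ (Icc a b))
    (hab : a < b) (hx : x ∈ Icc a b) (hφ : HasDerivAt φ φ' x) (hψ : HasDerivAt ψ ψ' x) :
    φ' = ψ' :=
  (uniqueDiffOn_Icc hab x hx).eq_deriv _ hφ.hasDerivWithinAt
    (hψ.hasDerivWithinAt.congr h (h hx))

/-- Differentiation under the integral sign for a `C¹` integrand on a bounded interval. -/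
lemma ContDiff.hasDerivAt_intervalIntegral {F : ℝ × ℝ → ℝ} (hF : ContDiff ℝ 1 F) (a b t : ℝ) :
    HasDerivAt (fun s => ∫ x in a..b, F (s, x)) (∫ x in a..b, fderiv ℝ F (t, x) (1, 0)) t := by
  have hcont : Continuous (fun p => fderiv ℝ F p (1, 0)) :=
    (hF.continuous_fderiv one_ne_zero).clm_apply continuous_const
  obtain ⟨C, hC⟩ := ((isCompact_Icc (a := t - 1) (b := t + 1)).prod
    (isCompact_uIcc (a := a) (b := b))).exists_bound_of_continuousOn hcont.continuousOn
  have hslice : ∀ s, Continuous (fun x => F (s, x)) := fun s =>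
    hF.continuous.comp (by fun_prop)
  refine (intervalIntegral.hasDerivAt_integral_of_dominated_loc_of_deriv_le
    (F := fun s x => F (s, x)) (F' := fun s x => fderiv ℝ F (s, x) (1, 0))
    (bound := fun _ => C) (Icc_mem_nhds (sub_one_lt t) (lt_add_one t))
    (Eventually.of_forall fun s => (hslice s).aestronglyMeasurable)
    ((hslice t).intervalIntegrable a b) ?_ ?_ intervalIntegrable_const ?_).2
  · exact (hcont.comp (by fun_prop : Continuous fun x : ℝ => (t, x))).aestronglyMeasurable
  · exact Eventually.of_forall fun x hx s hs => hC (s, x) ⟨hs, uIoc_subset_uIcc hx⟩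
  · exact Eventually.of_forall fun x _ s _ =>
      (hF.differentiable one_ne_zero (s, x)).hasDerivAt_fst

namespace BwdObserverSol

variable {T ω γ₁ γ₂ : ℝ} (S : BwdObserverSol T ω γ₁ γ₂)

lemma hasDerivAt_v1_fst (t x : ℝ) :
    HasDerivAt (fun s => S.v1 s x) (fderiv ℝ (Function.uncurry S.v1) (t, x) (1, 0)) t :=
  (S.smooth_v1.differentiable two_ne_zero (t, x)).hasDerivAt_fst

lemma hasDerivAt_v1_snd (t x : ℝ) :
    HasDerivAt (fun y => S.v1 t y) (fderiv ℝ (Function.uncurry S.v1) (t, x) (0, 1)) x :=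
  (S.smooth_v1.differentiable two_ne_zero (t, x)).hasDerivAt_snd

lemma hasDerivAt_v2_fst (t x : ℝ) :
    HasDerivAt (fun s => S.v2 s x) (fderiv ℝ (Function.uncurry S.v2) (t, x) (1, 0)) t :=
  (S.smooth_v2.differentiable two_ne_zero (t, x)).hasDerivAt_fst

lemma hasDerivAt_v2_snd (t x : ℝ) :
    HasDerivAt (fun y => S.v2 t y) (fderiv ℝ (Function.uncurry S.v2) (t, x) (0, 1)) x :=
  (S.smooth_v2.differentiable two_ne_zero (t, x)).hasDerivAt_snd

lemma hasDerivAt_v1_fst_of_mem {t x : ℝ} (ht : t ∈ Icc 0 T) (hx : x ∈ Icc (0 : ℝ) 1) :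
    HasDerivAt (fun s => S.v1 s x) (-S.v2 t x) t := by
  rw [← S.pde1 t ht x hx]
  exact (S.hasDerivAt_v1_fst t x).differentiableAt.hasDerivAt

lemma hasDerivAt_ξ1 {t : ℝ} (ht : t ∈ Icc 0 T) :
    HasDerivAt S.ξ1 (-S.ξ2 t - γ₂ * S.ξ1 t) t := by
  rw [← S.ode1 t ht]
  exact (S.smooth_ξ1.differentiable one_ne_zero t).hasDerivAt

lemma hasDerivAt_ξ2 {t : ℝ} (ht : t ∈ Icc 0 T) :
    HasDerivAt S.ξ2 (ω ^ 2 * S.ξ1 t - deriv (fun y => S.v1 t y) 0) t := by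
  rw [← S.ode2 t ht]
  exact (S.smooth_ξ2.differentiable one_ne_zero t).hasDerivAt

lemma hasDerivAt_ξ3 {t : ℝ} (ht : t ∈ Icc 0 T) : HasDerivAt S.ξ3 (S.ξ1 t) t := by
  rw [← S.ode3 t ht]
  exact (S.smooth_ξ3.differentiable one_ne_zero t).hasDerivAt

/-- The velocity vanishes at the clamped end. -/
lemma v2_one (hT : 0 < T) {t : ℝ} (ht : t ∈ Icc 0 T) : S.v2 t 1 = 0 := by
  have hclamped : EqOn (fun s => S.v1 s 1) (fun _ => 0) (Icc 0 T) := S.bc1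
  exact neg_eq_zero.mp <| hclamped.hasDerivAt_unique_Icc hT ht
    (S.hasDerivAt_v1_fst_of_mem ht (right_mem_Icc.mpr zero_le_one)) (hasDerivAt_const t 0)

/-- The velocity at the controlled end is driven by the observer state. -/
lemma v2_zero (hT : 0 < T) {t : ℝ} (ht : t ∈ Icc 0 T) : S.v2 t 0 = γ₁ * S.ξ2 t := by
  have hcontrol : EqOn (fun s => S.v1 s 0) (fun s => γ₁ * S.ξ1 s + γ₁ * γ₂ * S.ξ3 s)
      (Icc 0 T) := S.bc0
  have h := hcontrol.hasDerivAt_unique_Icc hT ht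
    (S.hasDerivAt_v1_fst_of_mem ht (left_mem_Icc.mpr zero_le_one))
    (((S.hasDerivAt_ξ1 ht).const_mul γ₁).add ((S.hasDerivAt_ξ3 ht).const_mul (γ₁ * γ₂)))
  linear_combination -h

/-- The wave energy changes only through the flux at the controlled end. -/
lemma hasDerivAt_waveEnergy (hT : 0 < T) {t : ℝ} (ht : t ∈ Icc 0 T) :
    HasDerivAt
      (fun s => ∫ x in (0 : ℝ)..1, ((deriv (fun y => S.v1 s y) x) ^ 2 + (S.v2 s x) ^ 2))
      (2 * γ₁ * deriv (fun y => S.v1 t y) 0 * S.ξ2 t) t := by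
  set g : ℝ × ℝ → ℝ := fun p => fderiv ℝ (Function.uncurry S.v1) p (0, 1) with hg
  have hgx : ∀ s x, deriv (fun y => S.v1 s y) x = g (s, x) := fun s x =>
    (S.hasDerivAt_v1_snd s x).deriv
  have hgC : ContDiff ℝ 1 g := S.smooth_v1.fderiv_apply_const_one (0, 1)
  have hgd : Differentiable ℝ g := hgC.differentiable one_ne_zero
  have hv2C : ContDiff ℝ 1 (Function.uncurry S.v2) := S.smooth_v2.of_le (by norm_num)
  set F : ℝ × ℝ → ℝ := fun p => g p ^ 2 + Function.uncurry S.v2 p ^ 2 with hF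
  have hFC : ContDiff ℝ 1 F := (hgC.pow 2).add (hv2C.pow 2)
  have hmixed : ∀ x ∈ Icc (0 : ℝ) 1,
      fderiv ℝ g (t, x) (1, 0) = -fderiv ℝ (Function.uncurry S.v2) (t, x) (0, 1) := by
    intro x hx
    have hvel : EqOn (fun y => fderiv ℝ (Function.uncurry S.v1) (t, y) (1, 0))
        (fun y => -S.v2 t y) (Icc 0 1) := fun y hy =>
      (S.hasDerivAt_v1_fst t y).unique (S.hasDerivAt_v1_fst_of_mem ht hy)
    rw [hg, S.smooth_v1.fderiv_fderiv_apply_comm]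
    exact hvel.hasDerivAt_unique_Icc zero_lt_one hx
      (((S.smooth_v1.fderiv_apply_const_one (1, 0)).differentiable one_ne_zero
        (t, x)).hasDerivAt_snd) (S.hasDerivAt_v2_snd t x).neg
  have hstress : ∀ x ∈ Icc (0 : ℝ) 1,
      fderiv ℝ (Function.uncurry S.v2) (t, x) (1, 0) = -fderiv ℝ g (t, x) (0, 1) := by
    intro x hx
    rw [← (S.hasDerivAt_v2_fst t x).deriv, S.pde2 t ht x hx, funext (hgx t),
      (hgd (t, x)).hasDerivAt_snd.deriv]
  have hflux : ∀ x ∈ uIcc (0 : ℝ) 1,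
      HasDerivAt (fun y => -2 * (g (t, y) * S.v2 t y)) (fderiv ℝ F (t, x) (1, 0)) x := by
    intro x hx
    rw [uIcc_of_le zero_le_one] at hx
    have hFt := (hFC.differentiable one_ne_zero (t, x)).hasDerivAt_fst.unique
      (((hgd (t, x)).hasDerivAt_fst.pow 2).add ((S.hasDerivAt_v2_fst t x).pow 2))
    rw [hmixed x hx, hstress x hx] at hFt
    rw [hFt]
    refine (((hgd (t, x)).hasDerivAt_snd.mul (S.hasDerivAt_v2_snd t x)).const_mul
      (-2)).congr_deriv ?_
    push_cast
    ring
  have hFt_cont : Continuous (fun x => fderiv ℝ F (t, x) (1, 0)) :=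
    ((hFC.continuous_fderiv one_ne_zero).clm_apply continuous_const).comp
      (by fun_prop : Continuous fun x : ℝ => (t, x))
  have hderiv := hFC.hasDerivAt_intervalIntegral 0 1 t
  rw [integral_eq_sub_of_hasDerivAt hflux (hFt_cont.intervalIntegrable 0 1),
    S.v2_one hT ht, S.v2_zero hT ht] at hderiv
  simp only [hgx]
  refine hderiv.congr_deriv ?_
  ring

end BwdObserverSol

/-- the same Lyapunov function
`V(t) = ½(∫₀¹(|∂ₓv¹|² + |v²|²) dx + γ₁ω²ξ₁² + γ₁ξ₂²)` also decreases along the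
backward (time-reversed) observer dynamics, with `V'(t) = −γ₁γ₂ω²ξ₁(t)² ≤ 0`. -/
theorem backward_lyapunov_decrease
    (T ω γ₁ γ₂ : ℝ) (hT : 0 < T) (hγ₁ : 0 < γ₁) (hγ₂ : 0 < γ₂)
    (S : BwdObserverSol T ω γ₁ γ₂)
    (V : ℝ → ℝ)
    (hV : V = fun t =>
      (1 / 2) * ((∫ x in (0:ℝ)..1,
          ((deriv (fun y => S.v1 t y) x) ^ 2 + (S.v2 t x) ^ 2))
        + γ₁ * ω ^ 2 * (S.ξ1 t) ^ 2 + γ₁ * (S.ξ2 t) ^ 2)) :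
    ∀ t ∈ Icc (0:ℝ) T,
      HasDerivAt V (-(γ₁ * γ₂ * ω ^ 2 * (S.ξ1 t) ^ 2)) t
        ∧ -(γ₁ * γ₂ * ω ^ 2 * (S.ξ1 t) ^ 2) ≤ 0 := by
  intro t ht
  refine ⟨?_, neg_nonpos.mpr (by positivity)⟩
  rw [hV]
  refine ((((S.hasDerivAt_waveEnergy hT ht).add
    (((S.hasDerivAt_ξ1 ht).pow 2).const_mul (γ₁ * ω ^ 2))).add
    (((S.hasDerivAt_ξ2 ht).pow 2).const_mul γ₁)).const_mul (1 / 2)).congr_deriv ?_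
  push_cast
  ring
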